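/- Let H be an m×n complex matrix, set Ĥ = 2HA†, Ĥ_R = (Ĥ + Ĥ*)/2 and Ĥ_I = (Ĥ − Ĥ*)/(2j). Then the real matched-filter autocorrelation equals the real-valued channel autocorrelation matrix: Ĥ_Rᵀ·Ĥ_R + Ĥ_Iᵀ·Ĥ_I = 2A(H†H + B(H†H)ᵀB)A†. -/

import Mathlib

open Matrix

noncomputable def Amat (ν : ℕ) : Matrix (Fin (2*ν)) (Fin (2*ν)) ℂ :=
  Matrix.diagonal (fun i => if Even (i : ℕ) then (1/2 : ℂ) else -Complex.I/2)

noncomputable def Bmat (ν : ℕ) : Matrix (Fin (2*ν)) (Fin (2*ν)) ℂ :=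
  Matrix.diagonal (fun i => (-1 : ℂ) ^ (i : ℕ))

/-!
The Gram matrices of the entrywise real and imaginary parts of `Ĥ` add up to the average of
`ĤᴴĤ` and its transpose, the terms `ĤᵀĤ` and their conjugates cancelling by polarization. With
`Ĥ = 2HAᴴ` and `G = HᴴH` the Gram matrix `ĤᴴĤ` is `4AGAᴴ`. As `B` is Hermitian and right
multiplication by `B` conjugates `A`, transposing `AGAᴴ` amounts to replacing `G` by `BGᵀB`.
-/

section General

variable {m n p : Type*}

lemma transpose_mul_self_add_sub_transpose_mul_self_sub {R : Type*} [NonUnitalNonAssocRing R]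
    [Fintype m] (M N : Matrix m n R) :
    (M + N)ᵀ * (M + N) - (M - N)ᵀ * (M - N) = 2 • (Mᵀ * N + Nᵀ * M) := by
  simp only [transpose_add, transpose_sub, Matrix.add_mul, Matrix.mul_add, Matrix.sub_mul,
    Matrix.mul_sub]
  abel

lemma transpose_mul_self_re_add_im [Fintype m] (M : Matrix m n ℂ) :
    ((2 : ℂ)⁻¹ • (M + M.map (starRingEnd ℂ)))ᵀ * ((2 : ℂ)⁻¹ • (M + M.map (starRingEnd ℂ))) +
      ((2 * Complex.I : ℂ)⁻¹ • (M - M.map (starRingEnd ℂ)))ᵀ *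
        ((2 * Complex.I : ℂ)⁻¹ • (M - M.map (starRingEnd ℂ))) =
    (2 : ℂ)⁻¹ • (Mᴴ * M + (Mᴴ * M)ᵀ) := by
  set N := M.map (starRingEnd ℂ)
  have hN : Nᵀ = Mᴴ := rfl
  have hgram : (Mᴴ * M)ᵀ = Mᵀ * N := by rw [transpose_mul, ← hN, transpose_transpose]
  have hre : (2 : ℂ)⁻¹ * (2 : ℂ)⁻¹ = 4⁻¹ := by norm_num
  have him : (2 * Complex.I)⁻¹ * (2 * Complex.I)⁻¹ = -(4 : ℂ)⁻¹ := by
    rw [← mul_inv, mul_mul_mul_comm, Complex.I_mul_I]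
    norm_num
  calc _ = (4 : ℂ)⁻¹ • ((M + N)ᵀ * (M + N) - (M - N)ᵀ * (M - N)) := by
        simp only [transpose_smul, Matrix.smul_mul, Matrix.mul_smul, smul_smul, hre, him]
        rw [neg_smul, ← sub_eq_add_neg, smul_sub]
    _ = (2 : ℂ)⁻¹ • (Mᵀ * N + Nᵀ * M) := by
        rw [transpose_mul_self_add_sub_transpose_mul_self_sub]
        module
    _ = _ := by rw [hgram, hN, add_comm]

lemma transpose_mul_mul_conjTranspose_of_mul_eq_map_star {R : Type*} [CommSemiring R]
    [StarRing R] [Fintype n] {A : Matrix p n R} {B : Matrix n n R} (hAB : A * B = A.map star)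
    (hB : B.IsHermitian) (G : Matrix n n R) :
    (A * G * Aᴴ)ᵀ = A * (B * Gᵀ * B) * Aᴴ := by
  have hBA : B * Aᴴ = Aᵀ := by
    rw [← hB.eq, ← conjTranspose_mul, hAB]
    ext
    simp
  calc (A * G * Aᴴ)ᵀ = A.map star * Gᵀ * Aᵀ := by
        rw [transpose_mul, transpose_mul, Matrix.mul_assoc]
        rfl
    _ = A * B * Gᵀ * (B * Aᴴ) := by rw [hAB, hBA]
    _ = A * (B * Gᵀ * B) * Aᴴ := by simp only [Matrix.mul_assoc]

theorem real_matched_filter_autocorrelation_general [Fintype m] [Fintype n]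
    {A : Matrix p n ℂ} {B : Matrix n n ℂ} (hAB : A * B = A.map star)
    (hB : B.IsHermitian) (H : Matrix m n ℂ) {Hhat HR HI : Matrix m p ℂ}
    (hHhat : Hhat = (2 : ℂ) • (H * Aᴴ))
    (hHR : HR = (2 : ℂ)⁻¹ • (Hhat + Hhat.map (starRingEnd ℂ)))
    (hHI : HI = (2 * Complex.I : ℂ)⁻¹ • (Hhat - Hhat.map (starRingEnd ℂ))) :
    HRᵀ * HR + HIᵀ * HI = (2 : ℂ) • (A * (Hᴴ * H + B * (Hᴴ * H)ᵀ * B) * Aᴴ) := by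
  have hgram : Hhatᴴ * Hhat = (4 : ℂ) • (A * (Hᴴ * H) * Aᴴ) := by
    simp only [hHhat, conjTranspose_smul, conjTranspose_mul, conjTranspose_conjTranspose,
      Matrix.smul_mul, Matrix.mul_smul, smul_smul, Matrix.mul_assoc]
    norm_num
  rw [hHR, hHI, transpose_mul_self_re_add_im, hgram, transpose_smul,
    transpose_mul_mul_conjTranspose_of_mul_eq_map_star hAB hB, Matrix.mul_add, Matrix.add_mul]
  module

end General

lemma Amat_mul_Bmat (ν : ℕ) : Amat ν * Bmat ν = (Amat ν).map star := by
  rw [Amat, Bmat, diagonal_mul_diagonal, diagonal_map (star_zero _)]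
  congr 1
  funext i
  rcases Nat.even_or_odd (i : ℕ) with h | h
  · simp [h]
  · simp [Nat.not_even_iff_odd.mpr h, h.neg_one_pow, neg_div]

lemma isHermitian_Bmat (ν : ℕ) : (Bmat ν).IsHermitian :=
  isHermitian_diagonal_of_self_adjoint _ (funext fun i => by simp)

theorem real_matched_filter_autocorrelation (ν m : ℕ) (hν : 1 ≤ ν) (hm : 1 ≤ m)
    (A B : Matrix (Fin (2*ν)) (Fin (2*ν)) ℂ)
    (hA : A = Amat ν) (hB : B = Bmat ν)
    (H : Matrix (Fin m) (Fin (2*ν)) ℂ)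
    (Hhat HR HI : Matrix (Fin m) (Fin (2*ν)) ℂ)
    (hHhat : Hhat = (2:ℂ) • (H * Aᴴ))
    (hHR : HR = ((2:ℂ))⁻¹ • (Hhat + Hhat.map (starRingEnd ℂ)))
    (hHI : HI = ((2 * Complex.I : ℂ))⁻¹ • (Hhat - Hhat.map (starRingEnd ℂ))) :
    HRᵀ * HR + HIᵀ * HI =
    (2:ℂ) • (A * (Hᴴ * H + B * (Hᴴ * H)ᵀ * B) * Aᴴ) := by
  subst hA hB
  exact real_matched_filter_autocorrelation_general (Amat_mul_Bmat ν) (isHermitian_Bmat ν) H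
    hHhat hHR hHI
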